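/- For every integer r ≥ 2 and every collectable r-pattern P, asymptotically almost surely z_{{P}}(RM_n^(r)) = Θ(n^(1/r)); that is, there exist constants c₁, c₂ > 0 (depending only on r and P) such that the probability that c₁·n^(1/r) ≤ z_{{P}}(RM_n^(r)) ≤ c₂·n^(1/r) tends to 1 as n → ∞. -/

import Mathlib

open Finset
open scoped Classical

/-- An ordered `r`-matching of size `n`: a partition of `[r*n] = {1,…,r*n}` into `n`
pairwise disjoint `r`-element subsets (the edges). -/
def IsOrderedMatching (r n : ℕ) (M : Finset (Finset ℕ)) : Prop :=
  M.card = n ∧ (∀ e ∈ M, e.card = r) ∧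
  (∀ e ∈ M, ∀ f ∈ M, e ≠ f → Disjoint e f) ∧
  M.biUnion id = Finset.Icc 1 (r * n)

/-- Two disjoint `r`-element sets `e`, `f` form the `r`-pattern `P`: the unique
order-preserving bijection from `e ∪ f` onto `[2r]` maps the pair `{e, f}` onto `P`. -/
def FormsPattern (r : ℕ) (e f : Finset ℕ) (P : Finset (Finset ℕ)) : Prop :=
  ∃ φ : ℕ → ℕ, StrictMonoOn φ ↑(e ∪ f) ∧
    (e ∪ f).image φ = Finset.Icc 1 (2 * r) ∧
    ({e.image φ, f.image φ} : Finset (Finset ℕ)) = P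

/-- A `Ps`-clique: a family of pairwise disjoint `r`-element subsets of `ℕ`, every two of
which form a pattern belonging to `Ps`. -/
def IsClique (r : ℕ) (Ps : Set (Finset (Finset ℕ))) (K : Finset (Finset ℕ)) : Prop :=
  (∀ e ∈ K, e.card = r) ∧ (∀ e ∈ K, ∀ f ∈ K, e ≠ f → Disjoint e f) ∧
  (∀ e ∈ K, ∀ f ∈ K, e ≠ f → ∃ P ∈ Ps, FormsPattern r e f P)

/-- `z_Ps(M)`: the maximum size of a subfamily of `M` that is a `Ps`-clique. -/
noncomputable def zClique (r : ℕ) (Ps : Set (Finset (Finset ℕ))) (M : Finset (Finset ℕ)) : ℕ :=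
  sSup {k | ∃ K : Finset (Finset ℕ), K ⊆ M ∧ IsClique r Ps K ∧ K.card = k}

/-- All ordered `r`-matchings of size `n` (as a finset). -/
noncomputable def matchingFamilies (r n : ℕ) : Finset (Finset (Finset ℕ)) :=
  ((Finset.Icc 1 (r * n)).powerset.powerset).filter (IsOrderedMatching r n)

/-- The probability of the event `A` for a uniformly random ordered `r`-matching of size `n`. -/
noncomputable def prob (r n : ℕ) (A : Finset (Finset ℕ) → Prop) : ℝ :=
  (((matchingFamilies r n).filter A).card : ℝ) / ((matchingFamilies r n).card : ℝ)

/-- Expectation of `X` with respect to a uniformly random ordered `r`-matching of size `n`. -/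
noncomputable def expect (r n : ℕ) (X : Finset (Finset ℕ) → ℝ) : ℝ :=
  (∑ M ∈ matchingFamilies r n, X M) / ((matchingFamilies r n).card : ℝ)

/-- An `r`-partite `r`-pattern: each edge contains exactly one of `{2i-1, 2i}` for each
`i = 1, …, r`. -/
def IsPartitePattern (r : ℕ) (P : Finset (Finset ℕ)) : Prop :=
  IsOrderedMatching r 2 P ∧
  ∀ e ∈ P, ∀ i ∈ Finset.Icc 1 r, (e ∩ {2 * i - 1, 2 * i}).card = 1

/-- An `r`-pattern `P` is collectable if there exist arbitrarily large `{P}`-cliques. -/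
def Collectable (r : ℕ) (P : Finset (Finset ℕ)) : Prop :=
  ∀ k : ℕ, ∃ K : Finset (Finset ℕ), IsClique r {P} K ∧ K.card = k

/-- The word of a pattern `P` over `{A=true, B=false}`: the `j`-th letter is `true` iff
vertex `j` lies in the edge of `P` containing `1`. -/
noncomputable def patternWord (r : ℕ) (P : Finset (Finset ℕ)) : List Bool :=
  (List.range (2 * r)).map (fun j => decide (∃ e ∈ P, 1 ∈ e ∧ j + 1 ∈ e))

/-- `lam` is a splitting of the word `w` into consecutive blocks of the form
`A^t B^t` or `B^t A^t` with half-lengths given by `lam`. -/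
def IsBlockSplitting (w : List Bool) (lam : List ℕ) : Prop :=
  (∀ t ∈ lam, 1 ≤ t) ∧
  ∃ bs : List Bool, bs.length = lam.length ∧
    w = (List.zipWith (fun t b => List.replicate t b ++ List.replicate t !b) lam bs).flatten

/-- The pattern `P` has composition `lam` (the sequence of half-lengths of the blocks of
its unique splitting). -/
def HasComposition (r : ℕ) (P : Finset (Finset ℕ)) (lam : List ℕ) : Prop :=
  IsBlockSplitting (patternWord r P) lam

/-- Two distinct collectable `r`-patterns are harmonious if they have the same composition. -/
def Harmonious (r : ℕ) (P Q : Finset (Finset ℕ)) : Prop :=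
  P ≠ Q ∧ Collectable r P ∧ Collectable r Q ∧
  ∃ lam : List ℕ, HasComposition r P lam ∧ HasComposition r Q lam

/-- A pair of distinct `r`-patterns is a mismatch if exactly one of them is collectable, or
both are collectable but their compositions differ. -/
def Mismatch (r : ℕ) (P Q : Finset (Finset ℕ)) : Prop :=
  P ≠ Q ∧
  ((Collectable r P ∧ ¬ Collectable r Q) ∨
   (¬ Collectable r P ∧ Collectable r Q) ∨
   (Collectable r P ∧ Collectable r Q ∧
     ¬ ∃ lam : List ℕ, HasComposition r P lam ∧ HasComposition r Q lam))

/-- The trace of an ordered `r`-matching of size `k` on `[rk]`: the `j`-th letter equals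
`i` when `j` is the `i`-th smallest element of the edge containing `j`. -/
noncomputable def trace (r k : ℕ) (M : Finset (Finset ℕ)) : List ℕ :=
  (List.range (r * k)).map (fun j₀ =>
    ((Finset.Icc 1 (r * k)).filter
      (fun x => x ≤ j₀ + 1 ∧ ∃ e ∈ M, j₀ + 1 ∈ e ∧ x ∈ e)).card)

/-- `a_Ps(k)`: the number of `Ps`-cliques of size `k` whose edges partition `[rk]`. -/
noncomputable def cliqueCount (r : ℕ) (Ps : Set (Finset (Finset ℕ))) (k : ℕ) : ℕ :=
  (((Finset.Icc 1 (r * k)).powerset.powerset).filter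
    (fun M => IsOrderedMatching r k M ∧ IsClique r Ps M)).card

/-- The maximum size of any `Ps`-clique whatsoever. -/
noncomputable def maxCliqueSize (r : ℕ) (Ps : Set (Finset (Finset ℕ))) : ℕ :=
  sSup {k | ∃ K : Finset (Finset ℕ), IsClique r Ps K ∧ K.card = k}

/-- `M` contains a copy of the ordered `r`-matching `H` of size `k`: a subfamily `N ⊆ M` of
`k` edges such that the order-preserving bijection from the union of the edges of `N`
onto `[rk]` maps `N` onto `H`. -/
def ContainsCopy (r k : ℕ) (H M : Finset (Finset ℕ)) : Prop :=
  ∃ N ⊆ M, N.card = k ∧ ∃ φ : ℕ → ℕ,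
    StrictMonoOn φ ↑(N.biUnion id) ∧
    (N.biUnion id).image φ = Finset.Icc 1 (r * k) ∧
    N.image (fun e => e.image φ) = H

/-- Delete the `j`-th smallest element of the finite set `e`. -/
def deleteJth (j : ℕ) (e : Finset ℕ) : Finset ℕ :=
  e.filter (fun x => (e.filter (· ≤ x)).card ≠ j)

/-- Relabel the elements of `e` order-preservingly by their ranks in `V`. -/
def relabel (V : Finset ℕ) (e : Finset ℕ) : Finset ℕ :=
  e.image (fun x => (V.filter (· ≤ x)).card)

/-- `S^(−j)`: delete from each edge of the pattern `S` its `j`-th smallest element and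
relabel the remaining vertices order-preservingly. -/
def patternDelete (j : ℕ) (S : Finset (Finset ℕ)) : Finset (Finset ℕ) :=
  (S.image (deleteJth j)).image (relabel ((S.image (deleteJth j)).biUnion id))

/-- The permutation model: bijections from an `n × r` array onto `[rn]`. -/
abbrev Om (r n : ℕ) := (Fin n × Fin r) ≃ ↥(Finset.Icc 1 (r * n))

/-- The edge given by row `i`. -/
noncomputable def rowEdge {r n : ℕ} (σ : Om r n) (i : Fin n) : Finset ℕ :=
  univ.image (fun c : Fin r => (σ (i, c) : ℕ))

/-- The matching given by the rows. -/
noncomputable def toM {r n : ℕ} (σ : Om r n) : Finset (Finset ℕ) := univ.image (rowEdge σ)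

lemma mem_rowEdge {r n : ℕ} (σ : Om r n) (i : Fin n) (x : ℕ) :
    x ∈ rowEdge σ i ↔ ∃ c, (σ (i, c) : ℕ) = x := by
  simp [rowEdge]

lemma card_rowEdge {r n : ℕ} (σ : Om r n) (i : Fin n) : (rowEdge σ i).card = r := by
  unfold rowEdge
  rw [Finset.card_image_of_injective]
  · simp
  · intro c d h
    have := σ.injective (Subtype.ext h)
    simpa using this

lemma disjoint_rowEdge {r n : ℕ} (σ : Om r n) {i j : Fin n} (h : i ≠ j) :
    Disjoint (rowEdge σ i) (rowEdge σ j) := by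
  rw [Finset.disjoint_left]
  intro x hx hy
  rw [mem_rowEdge] at hx hy
  obtain ⟨c, hc⟩ := hx
  obtain ⟨d, hd⟩ := hy
  have := σ.injective (Subtype.ext (hc.trans hd.symm))
  simp at this
  exact h this.1

lemma rowEdge_injective {r n : ℕ} (hr : 0 < r) (σ : Om r n) : Function.Injective (rowEdge σ) := by
  intro i j h
  by_contra hne
  have hd := disjoint_rowEdge σ hne
  rw [h, disjoint_self_iff_empty] at hd
  have := card_rowEdge σ j
  rw [hd] at this
  simp at this
  omega

lemma toM_isMatching {r n : ℕ} (hr : 0 < r) (σ : Om r n) : IsOrderedMatching r n (toM σ) := by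
  refine ⟨?_, ?_, ?_, ?_⟩
  · unfold toM
    rw [Finset.card_image_of_injective _ (rowEdge_injective hr σ)]
    simp
  · intro e he
    simp only [toM, Finset.mem_image] at he
    obtain ⟨i, -, rfl⟩ := he
    exact card_rowEdge σ i
  · intro e he f hf hne
    simp only [toM, Finset.mem_image] at he hf
    obtain ⟨i, -, rfl⟩ := he
    obtain ⟨j, -, rfl⟩ := hf
    exact disjoint_rowEdge σ (fun h => hne (by rw [h]))
  · ext x
    simp only [toM, Finset.mem_biUnion, Finset.mem_image, id]
    constructor
    · rintro ⟨e, ⟨i, -, rfl⟩, hx⟩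
      rw [mem_rowEdge] at hx
      obtain ⟨c, rfl⟩ := hx
      exact (σ (i, c)).2
    · intro hx
      refine ⟨rowEdge σ (σ.symm ⟨x, hx⟩).1, ⟨_, mem_univ _, rfl⟩, ?_⟩
      rw [mem_rowEdge]
      exact ⟨(σ.symm ⟨x, hx⟩).2, by simp⟩

lemma mem_matchingFamilies {r n : ℕ} {M : Finset (Finset ℕ)} :
    M ∈ matchingFamilies r n ↔ IsOrderedMatching r n M := by
  unfold matchingFamilies
  rw [Finset.mem_filter]
  constructor
  · exact fun h => h.2
  · intro h
    refine ⟨?_, h⟩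
    rw [Finset.mem_powerset]
    intro e he
    rw [Finset.mem_powerset, ← h.2.2.2]
    exact Finset.subset_biUnion_of_mem id he

lemma exists_toM {r n : ℕ} {M : Finset (Finset ℕ)} (h : IsOrderedMatching r n M) :
    ∃ σ : Om r n, toM σ = M := by
  obtain ⟨hc, he, hd, hu⟩ := h
  let E : Fin n ≃ ↥M := (Finset.equivFinOfCardEq hc).symm
  let g : Fin n × Fin r → ↥(Finset.Icc 1 (r * n)) := fun p =>
    ⟨(E p.1 : Finset ℕ).orderEmbOfFin (he _ (E p.1).2) p.2, by
      rw [← hu]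
      exact Finset.subset_biUnion_of_mem id (E p.1).2 (Finset.orderEmbOfFin_mem _ _ _)⟩
  have hg : Function.Injective g := by
    rintro ⟨i, c⟩ ⟨j, d⟩ h
    have h' : (E i : Finset ℕ).orderEmbOfFin (he _ (E i).2) c
      = (E j : Finset ℕ).orderEmbOfFin (he _ (E j).2) d := congrArg Subtype.val h
    have hij : i = j := by
      by_contra hne
      have := hd _ (E i).2 _ (E j).2 (fun h => hne (E.injective (Subtype.ext h)))
      rw [Finset.disjoint_left] at this
      refine this (Finset.orderEmbOfFin_mem _ (he _ (E i).2) c) ?_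
      rw [h']
      exact Finset.orderEmbOfFin_mem _ _ _
    subst hij
    simpa using h'
  have hb : Function.Bijective g := by
    rw [Fintype.bijective_iff_injective_and_card]
    refine ⟨hg, ?_⟩
    simp [mul_comm]
  have hrow : ∀ i, rowEdge (Equiv.ofBijective g hb) i = (E i : Finset ℕ) := by
    intro i
    ext x
    rw [mem_rowEdge]
    have := Finset.range_orderEmbOfFin (E i : Finset ℕ) (he _ (E i).2)
    have h2 : x ∈ (E i : Finset ℕ) ↔ x ∈ Set.range ((E i : Finset ℕ).orderEmbOfFin (he _ (E i).2)) := by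
      rw [this]; simp
    rw [h2]
    rfl
  refine ⟨Equiv.ofBijective g hb, ?_⟩
  ext e
  simp only [toM, Finset.mem_image, hrow]
  constructor
  · rintro ⟨i, -, rfl⟩
    exact (E i).2
  · intro h
    exact ⟨E.symm ⟨e, h⟩, mem_univ _, by simp⟩

lemma rowEdge_trans {r n : ℕ} (σ : Om r n) (g : Equiv.Perm ↥(Finset.Icc 1 (r * n))) (i : Fin n) :
    rowEdge (σ.trans g) i
      = (univ.filter (fun x : ↥(Finset.Icc 1 (r * n)) => (x : ℕ) ∈ rowEdge σ i)).image
          (fun x => (g x : ℕ)) := by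
  ext x
  simp only [mem_rowEdge, Finset.mem_image, Finset.mem_filter, Finset.mem_univ, true_and]
  constructor
  · rintro ⟨c, rfl⟩
    exact ⟨σ (i, c), ⟨c, rfl⟩, rfl⟩
  · rintro ⟨y, ⟨c, hc⟩, rfl⟩
    refine ⟨c, ?_⟩
    have : σ (i, c) = y := Subtype.ext hc
    simp [this]

lemma toM_trans {r n : ℕ} (σ : Om r n) (g : Equiv.Perm ↥(Finset.Icc 1 (r * n))) :
    toM (σ.trans g) = (toM σ).image (fun e =>
      (univ.filter (fun x : ↥(Finset.Icc 1 (r * n)) => (x : ℕ) ∈ e)).image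
          (fun x => (g x : ℕ))) := by
  unfold toM
  rw [Finset.image_image]
  apply Finset.image_congr
  intro i _
  simp [rowEdge_trans]

lemma fiber_le {r n : ℕ} {M N : Finset (Finset ℕ)} (hM : IsOrderedMatching r n M)
    (hN : IsOrderedMatching r n N) :
    (univ.filter (fun σ : Om r n => toM σ = M)).card
      ≤ (univ.filter (fun σ : Om r n => toM σ = N)).card := by
  obtain ⟨β, hβ⟩ := exists_toM hM
  obtain ⟨γ, hγ⟩ := exists_toM hN
  apply Finset.card_le_card_of_injOn (fun σ => σ.trans (β.symm.trans γ))
  · intro σ hσ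
    simp only [Finset.coe_filter, Finset.mem_univ, true_and, Set.mem_ofPred_eq] at hσ ⊢
    rw [toM_trans, hσ, ← hβ, ← toM_trans, ← hγ]
    congr 1
    ext; simp
  · intro σ _ τ _ h
    ext p
    have := congrArg (fun e => e p) h
    simp at this
    rw [this]

lemma prob_eq {r n : ℕ} (hr : 0 < r) (A : Finset (Finset ℕ) → Prop) :
    prob r n A = ((univ.filter (fun σ : Om r n => A (toM σ))).card : ℝ)
      / (Fintype.card (Om r n) : ℝ) := by
  have hne : Nonempty (Om r n) := ⟨Fintype.equivOfCardEq (by simp [mul_comm])⟩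
  obtain ⟨σ₀⟩ := hne
  set c := (univ.filter (fun σ : Om r n => toM σ = toM σ₀)).card with hc
  have hfib : ∀ M ∈ matchingFamilies r n,
      (univ.filter (fun σ : Om r n => toM σ = M)).card = c := by
    intro M hM
    rw [mem_matchingFamilies] at hM
    exact le_antisymm (fiber_le hM (toM_isMatching hr _)) (fiber_le (toM_isMatching hr _) hM)
  have hcpos : 0 < c := Finset.card_pos.mpr ⟨σ₀, by simp⟩
  have key : ∀ B : Finset (Finset ℕ) → Prop,
      (univ.filter (fun σ : Om r n => B (toM σ))).card
        = ((matchingFamilies r n).filter B).card * c := by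
    intro B
    rw [Finset.card_eq_sum_card_fiberwise (f := toM) (t := (matchingFamilies r n).filter B)]
    · rw [Finset.sum_const_nat (m := c)]
      intro M hM
      rw [Finset.mem_filter] at hM
      rw [← hfib M hM.1, Finset.filter_filter]
      congr 1
      ext σ
      simp only [Finset.mem_filter, Finset.mem_univ, true_and]
      constructor
      · exact fun h => h.2
      · exact fun h => ⟨h ▸ hM.2, h⟩
    · intro σ hσ
      simp only [Finset.coe_filter, Finset.mem_univ, true_and, Set.mem_ofPred_eq] at hσ ⊢
      exact ⟨mem_matchingFamilies.mpr (toM_isMatching hr σ), hσ⟩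
  have h1 := key A
  have h2 := key (fun _ => True)
  simp only [Finset.filter_true, Finset.card_univ] at h2
  unfold prob
  rw [h1, h2]
  have : (c : ℝ) ≠ 0 := by positivity
  push_cast
  rw [mul_div_mul_right _ _ this]

lemma card_Om_pos (r n : ℕ) : 0 < Fintype.card (Om r n) := by
  have hne : Nonempty (Om r n) := ⟨Fintype.equivOfCardEq (by simp [mul_comm])⟩
  exact Fintype.card_pos

lemma occ {ι D : Type} [Fintype ι] [Fintype D] (w : ι → D) (hw : Function.Injective w) (n k : ℕ)
    (hk : Fintype.card ι = k) :
    (univ.filter (fun f : Fin n → D =>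
      2 * (univ.filter (fun j : ι => ∃ i, f i = w j)).card < k)).card
      ≤ 2 ^ k * (Fintype.card D - k / 2) ^ n := by
  have hsub : (univ.filter (fun f : Fin n → D =>
      2 * (univ.filter (fun j : ι => ∃ i, f i = w j)).card < k))
      ⊆ ((univ : Finset (Finset ι)).filter (fun A => k / 2 ≤ A.card)).biUnion
        (fun A => Fintype.piFinset (fun _ : Fin n => univ \ A.image w)) := by
    intro f hf
    simp only [Finset.mem_filter, Finset.mem_univ, true_and] at hf
    rw [Finset.mem_biUnion]
    refine ⟨univ.filter (fun j : ι => ¬ ∃ i, f i = w j), ?_, ?_⟩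
    · have := Finset.card_filter_add_card_filter_not (s := (univ : Finset ι))
        (fun j : ι => ∃ i, f i = w j)
      rw [Finset.card_univ, hk] at this
      simp only [Finset.mem_filter, Finset.mem_univ, true_and]
      omega
    · rw [Fintype.mem_piFinset]
      intro i
      simp only [Finset.mem_sdiff, Finset.mem_univ, true_and, Finset.mem_image, Finset.mem_filter]
      rintro ⟨j, hj, h⟩
      exact hj ⟨i, h.symm⟩
  refine (Finset.card_le_card hsub).trans ?_
  refine Finset.card_biUnion_le.trans ?_
  refine (Finset.sum_le_card_nsmul _ _ ((Fintype.card D - k / 2) ^ n) ?_).trans ?_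
  · intro A hA
    simp only [Finset.mem_filter, Finset.mem_univ, true_and] at hA
    rw [Fintype.card_piFinset]
    simp only [Finset.prod_const, Finset.card_univ, Fintype.card_fin]
    apply Nat.pow_le_pow_left
    rw [Finset.card_sdiff_of_subset (Finset.subset_univ _), Finset.card_image_of_injective _ hw,
      Finset.card_univ]
    omega
  · rw [smul_eq_mul]
    apply Nat.mul_le_mul_right
    refine (Finset.card_le_univ _).trans ?_
    rw [Fintype.card_finset, hk]

lemma exists_compat {r n : ℕ} {U : Type} [LinearOrder U] (f : Fin n × Fin r → U) :
    ∃ σ : Om r n, ∀ u v, f u < f v → (σ u : ℕ) < σ v := by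
  have e : (Fin n × Fin r) ≃ Fin (r * n) := Fintype.equivOfCardEq (by simp [mul_comm])
  have hcard : (Finset.Icc 1 (r * n)).card = r * n := by simp
  let o := (Finset.Icc 1 (r * n)).orderIsoOfFin hcard
  let s := Tuple.sort (f ∘ e.symm)
  have hs : Monotone ((f ∘ e.symm) ∘ s) := Tuple.monotone_sort _
  refine ⟨(e.trans s.symm).trans o.toEquiv, ?_⟩
  intro u v huv
  have : s.symm (e u) < s.symm (e v) := by
    by_contra hcon
    have := hs (not_lt.mp hcon)
    simp at this
    exact absurd huv (not_lt.mpr this)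
  have h2 := o.strictMono this
  exact h2

lemma transfer {r n : ℕ} {U : Type} [Fintype U] [LinearOrder U] (B : Om r n → Prop)
    (C : (Fin n × Fin r → U) → Prop)
    (h : ∀ (σ : Om r n) (f : Fin n × Fin r → U),
      (∀ u v, f u < f v → (σ u : ℕ) < σ v) → B σ → C f) :
    (univ.filter B).card * Fintype.card (Fin n × Fin r → U)
      ≤ (univ.filter C).card * Fintype.card (Om r n) := by
  choose s hs using fun f : Fin n × Fin r → U => exists_compat f
  have hO : Fintype.card (Om r n) = Fintype.card (Equiv.Perm (Fin n × Fin r)) := by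
    obtain ⟨e⟩ : Nonempty (Om r n) := ⟨Fintype.equivOfCardEq (by simp [mul_comm])⟩
    rw [Fintype.card_equiv e, Fintype.card_perm]
  rw [hO, ← Finset.card_univ, ← Finset.card_univ, ← Finset.card_product, ← Finset.card_product]
  apply Finset.card_le_card_of_injOn
    (fun p => (p.2 ∘ (p.1.trans (s p.2).symm), p.1.trans (s p.2).symm))
  · rintro ⟨σ, f⟩ hp
    simp only [Finset.coe_product, Set.mem_prod, Finset.mem_coe, Finset.mem_filter,
      Finset.mem_univ, true_and, and_true] at hp ⊢
    refine h σ _ ?_ hp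
    intro u v huv
    have := hs f _ _ huv
    simpa using this
  · rintro ⟨σ, f⟩ - ⟨τ, g⟩ - heq
    simp only [Prod.mk.injEq] at heq
    obtain ⟨h1, h2⟩ := heq
    have hfg : f = g := by
      rw [h2] at h1
      funext v
      have := congrFun h1 ((τ.trans (s g).symm).symm v)
      simpa using this
    subst hfg
    have : σ = τ := by
      ext v
      have := congrArg (fun e => e v) h2
      simp at this
      rw [this]
    rw [this]

lemma formsPattern_lift {r : ℕ} {e f E F : Finset ℕ} {P : Finset (Finset ℕ)} (ψ : ℕ → ℕ)
    (hψ : StrictMonoOn ψ ↑(E ∪ F)) (hE : E.image ψ = e) (hF : F.image ψ = f)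
    (h : FormsPattern r e f P) : FormsPattern r E F P := by
  obtain ⟨φ, h1, h2, h3⟩ := h
  have hEF : (E ∪ F).image ψ = e ∪ f := by rw [Finset.image_union, hE, hF]
  refine ⟨φ ∘ ψ, ?_, ?_, ?_⟩
  · refine h1.comp hψ ?_
    intro x hx
    rw [← hEF]
    exact Finset.mem_coe.mpr (Finset.mem_image_of_mem _ hx)
  · rw [← Finset.image_image, hEF, h2]
  · rw [← Finset.image_image, ← Finset.image_image, hE, hF, h3]

lemma le_zClique {r : ℕ} {Ps : Set (Finset (Finset ℕ))} {M K : Finset (Finset ℕ)}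
    (hK : K ⊆ M) (hc : IsClique r Ps K) : K.card ≤ zClique r Ps M := by
  unfold zClique
  apply le_csSup
  · refine ⟨M.card, ?_⟩
    rintro k ⟨L, hL, -, rfl⟩
    exact Finset.card_le_card hL
  · exact ⟨K, hK, hc, rfl⟩

lemma hits_le_zClique {r n : ℕ} (hr : 0 < r) {P : Finset (Finset ℕ)} {K : Finset (Finset ℕ)}
    (hK : IsClique r {P} K) (w : ↥K → Fin r → ↥(K.biUnion id))
    (hw : ∀ e, univ.image (fun c => (w e c : ℕ)) = (e : Finset ℕ))
    (σ : Om r n) (f : Fin n × Fin r → ↥(K.biUnion id))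
    (hf : ∀ u v, f u < f v → (σ u : ℕ) < σ v) :
    (univ.filter (fun j : ↥K => ∃ i, (fun c => f (i, c)) = w j)).card
      ≤ zClique r {P} (toM σ) := by
  set H := univ.filter (fun j : ↥K => ∃ i, (fun c => f (i, c)) = w j) with hH
  let ψ : ℕ → ℕ := fun x => if hx : x ∈ Finset.Icc 1 (r * n) then (f (σ.symm ⟨x, hx⟩) : ℕ) else 0
  have hψ : ∀ p, ψ (σ p) = f p := by
    intro p
    have : (σ p : ℕ) ∈ Finset.Icc 1 (r * n) := (σ p).2
    simp only [ψ, dif_pos this]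
    simp
  have himg : ∀ i (j : ↥K), (fun c => f (i, c)) = w j → (rowEdge σ i).image ψ = (j : Finset ℕ) := by
    intro i j hij
    rw [← hw j]
    unfold rowEdge
    rw [Finset.image_image]
    apply Finset.image_congr
    intro c _
    simp only [Function.comp, hψ]
    rw [← hij]
  have hch : ∀ j : ↥H, ∃ i, (fun c => f (i, c)) = w j := fun j => (Finset.mem_filter.mp j.2).2
  choose i hi using hch
  have hiinj : Function.Injective i := by
    intro a b hab
    have h1 := himg _ _ (hi a)
    have h2 := himg _ _ (hi b)
    rw [hab, h2] at h1
    exact Subtype.ext (Subtype.ext h1.symm)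
  have hcard : (univ.image (fun j : ↥H => rowEdge σ (i j))).card = H.card := by
    have := Finset.card_image_of_injective (univ : Finset ↥H) ((rowEdge_injective hr σ).comp hiinj)
    simpa [Function.comp_def] using this
  rw [← hcard]
  apply le_zClique
  · intro e he
    rw [Finset.mem_image] at he
    obtain ⟨j, -, rfl⟩ := he
    exact Finset.mem_image_of_mem _ (mem_univ _)
  · refine ⟨?_, ?_, ?_⟩
    · intro e he
      rw [Finset.mem_image] at he
      obtain ⟨j, -, rfl⟩ := he
      exact card_rowEdge _ _
    · intro e he e' he' hne
      rw [Finset.mem_image] at he he'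
      obtain ⟨j, -, rfl⟩ := he
      obtain ⟨j', -, rfl⟩ := he'
      exact disjoint_rowEdge σ (fun h => hne (by rw [h]))
    · intro e he e' he' hne
      rw [Finset.mem_image] at he he'
      obtain ⟨j, -, rfl⟩ := he
      obtain ⟨j', -, rfl⟩ := he'
      have hjj : (j : ↥K) ≠ (j' : ↥K) := by
        intro h
        exact hne (by rw [Subtype.ext h])
      have hjj' : ((j : ↥K) : Finset ℕ) ≠ ((j' : ↥K) : Finset ℕ) := fun h => hjj (Subtype.ext h)
      obtain ⟨Q, hQ, hform⟩ := hK.2.2 _ (j : ↥K).2 _ (j' : ↥K).2 hjj'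
      refine ⟨Q, hQ, formsPattern_lift ψ ?_ (himg _ _ (hi j)) (himg _ _ (hi j')) hform⟩
      have hinj : Set.InjOn ψ ↑(rowEdge σ (i j) ∪ rowEdge σ (i j')) := by
        rw [← Finset.card_image_iff, Finset.image_union, himg _ _ (hi j), himg _ _ (hi j'),
          Finset.card_union_of_disjoint (hK.2.1 _ (j : ↥K).2 _ (j' : ↥K).2 hjj'),
          Finset.card_union_of_disjoint (disjoint_rowEdge σ (fun h => hne (by rw [h]))),
          card_rowEdge, card_rowEdge, hK.1 _ (j : ↥K).2, hK.1 _ (j' : ↥K).2]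
      have hall : ∀ x ∈ rowEdge σ (i j) ∪ rowEdge σ (i j'), ∃ p, (σ p : ℕ) = x := by
        intro x hx
        rw [Finset.mem_union, mem_rowEdge, mem_rowEdge] at hx
        rcases hx with ⟨c, hc⟩ | ⟨c, hc⟩
        · exact ⟨_, hc⟩
        · exact ⟨_, hc⟩
      intro x hx y hy hxy
      obtain ⟨p, rfl⟩ := hall x hx
      obtain ⟨q, rfl⟩ := hall y hy
      have hne' : ψ (σ p) ≠ ψ (σ q) := fun h => hxy.ne (hinj hx hy h)
      rw [hψ, hψ] at hne' ⊢
      rcases lt_or_gt_of_ne hne' with h | h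
      · exact h
      · exact absurd (hf q p h) (not_lt.mpr hxy.le)

lemma exists_w {r : ℕ} {P : Finset (Finset ℕ)} {K : Finset (Finset ℕ)}
    (hK : IsClique r {P} K) : ∃ w : ↥K → Fin r → ↥(K.biUnion id),
    ∀ e, univ.image (fun c => (w e c : ℕ)) = (e : Finset ℕ) := by
  refine ⟨fun e c => ⟨(e : Finset ℕ).orderEmbOfFin (hK.1 _ e.2) c,
    Finset.subset_biUnion_of_mem id e.2 (Finset.orderEmbOfFin_mem _ _ _)⟩, ?_⟩
  intro e
  exact Finset.image_orderEmbOfFin_univ _ _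

/-- Lower tail, in the permutation model, as a counting bound. -/
lemma lower_count {r n k : ℕ} (hr : 0 < r) {P : Finset (Finset ℕ)} (hcP : Collectable r P)
    (B : Om r n → Prop) (hB : ∀ σ, B σ → 2 * zClique r {P} (toM σ) < k) :
    (univ.filter B).card * ((r * k) ^ r) ^ n
      ≤ 2 ^ k * ((r * k) ^ r - k / 2) ^ n * Fintype.card (Om r n) := by
  obtain ⟨K, hK, hKk⟩ := hcP k
  obtain ⟨w, hw⟩ := exists_w hK
  have hwinj : Function.Injective w := by
    intro a b hab
    apply Subtype.ext
    rw [← hw a, ← hw b, hab]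
  have hU : Fintype.card ↥(K.biUnion id) = r * k := by
    rw [Fintype.card_coe, Finset.card_biUnion (t := id) (fun e he f hf hne => hK.2.1 e he f hf hne)]
    rw [Finset.sum_const_nat (f := fun u => (id u : Finset ℕ).card) (m := r)
      (fun e he => hK.1 e he), hKk, mul_comm]
  have hocc := occ w hwinj n k (by simp [hKk])
  have htr := transfer (r := r) (n := n) (U := ↥(K.biUnion id))
    B
    (fun f => 2 * (univ.filter (fun j : ↥K => ∃ i, (fun c => f (i, c)) = w j)).card < k)
    (by
      intro σ f hf hσ
      have := hits_le_zClique hr hK w hw σ f hf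
      have := hB σ hσ
      omega)
  have hF : Fintype.card (Fin n × Fin r → ↥(K.biUnion id)) = ((r * k) ^ r) ^ n := by
    rw [Fintype.card_fun, hU]
    simp [← pow_mul, mul_comm]
  have hD : Fintype.card (Fin r → ↥(K.biUnion id)) = (r * k) ^ r := by
    rw [Fintype.card_fun, hU]
    simp
  rw [hF] at htr
  rw [hD] at hocc
  refine htr.trans (Nat.mul_le_mul_right _ (le_trans ?_ hocc))
  apply Finset.card_le_card_of_injOn (fun f i c => f (i, c))
  · intro f hf
    simp only [Finset.coe_filter, Finset.mem_univ, true_and, Set.mem_ofPred_eq] at hf ⊢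
    exact hf
  · intro f _ g _ h
    funext p
    exact congrFun (congrFun h p.1) p.2

/-- The `c`-th smallest element of an `r`-element set. -/
noncomputable def srt (r : ℕ) (e : Finset ℕ) (c : Fin r) : ℕ :=
  if h : e.card = r then e.orderEmbOfFin h c else 0

lemma srt_mem {r : ℕ} {e : Finset ℕ} (h : e.card = r) (c : Fin r) : srt r e c ∈ e := by
  simp only [srt, dif_pos h]
  exact Finset.orderEmbOfFin_mem _ _ _

lemma srt_strictMono {r : ℕ} {e : Finset ℕ} (h : e.card = r) : StrictMono (srt r e) := by
  intro a b hab
  simp only [srt, dif_pos h]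
  exact (e.orderEmbOfFin h).strictMono hab

lemma srt_unique {r : ℕ} {e : Finset ℕ} (h : e.card = r) (g : Fin r → ℕ) (hg : ∀ c, g c ∈ e)
    (hm : StrictMono g) (c : Fin r) : g c = srt r e c := by
  simp only [srt, dif_pos h]
  rw [Finset.orderEmbOfFin_unique h hg hm]

lemma pattern_sign {r : ℕ} (hr : 0 < r) {P : Finset (Finset ℕ)} (hP : IsOrderedMatching r 2 P) :
    ∃ s : Fin r → Prop, ∀ e f : Finset ℕ, e.card = r → f.card = r → FormsPattern r e f P →
      srt r e ⟨0, hr⟩ < srt r f ⟨0, hr⟩ → ∀ c, (srt r e c < srt r f c ↔ s c) := by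
  obtain ⟨h2, hcard, hdis, -⟩ := hP
  rw [Finset.card_eq_two] at h2
  have key : ∃ P₁ P₂ : Finset ℕ, P = {P₁, P₂} ∧ P₁.card = r ∧ P₂.card = r ∧
      srt r P₁ ⟨0, hr⟩ ≤ srt r P₂ ⟨0, hr⟩ := by
    obtain ⟨A, B, hne, rfl⟩ := h2
    have hA := hcard A (by simp)
    have hB := hcard B (by simp)
    rcases le_total (srt r A ⟨0, hr⟩) (srt r B ⟨0, hr⟩) with h | h
    · exact ⟨A, B, rfl, hA, hB, h⟩
    · exact ⟨B, A, Finset.pair_comm _ _, hB, hA, h⟩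
  obtain ⟨P₁, P₂, rfl, h1, h2', hle⟩ := key
  refine ⟨fun c => srt r P₁ c < srt r P₂ c, ?_⟩
  rintro e f he hf ⟨φ, hφ, -, hpair⟩ hlt c
  have hsub : ∀ c, srt r e c ∈ (↑(e ∪ f) : Set ℕ) := fun c =>
    Finset.mem_coe.mpr (Finset.mem_union_left _ (srt_mem he c))
  have hsub' : ∀ c, srt r f c ∈ (↑(e ∪ f) : Set ℕ) := fun c =>
    Finset.mem_coe.mpr (Finset.mem_union_right _ (srt_mem hf c))
  have hcomp : ∀ c, srt r e c < srt r f c ↔ φ (srt r e c) < φ (srt r f c) := fun c =>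
    (hφ.lt_iff_lt (hsub c) (hsub' c)).symm
  have hE : ∀ Q : Finset ℕ, Q.card = r → e.image φ = Q → ∀ c, φ (srt r e c) = srt r Q c := by
    rintro Q hQ rfl c
    exact srt_unique hQ (fun c => φ (srt r e c))
      (fun c => Finset.mem_image_of_mem _ (srt_mem he c))
      (fun a b hab => hφ (hsub a) (hsub b) (srt_strictMono he hab)) c
  have hF : ∀ Q : Finset ℕ, Q.card = r → f.image φ = Q → ∀ c, φ (srt r f c) = srt r Q c := by
    rintro Q hQ rfl c
    exact srt_unique hQ (fun c => φ (srt r f c))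
      (fun c => Finset.mem_image_of_mem _ (srt_mem hf c))
      (fun a b hab => hφ (hsub' a) (hsub' b) (srt_strictMono hf hab)) c
  have hcases : (e.image φ = P₁ ∧ f.image φ = P₂) ∨ (e.image φ = P₂ ∧ f.image φ = P₁) := by
    have hc := congrArg (fun S : Finset (Finset ℕ) => (S : Set (Finset ℕ))) hpair
    simp only [Finset.coe_insert, Finset.coe_singleton] at hc
    exact Set.pair_eq_pair_iff.mp hc
  rcases hcases with ⟨a, b⟩ | ⟨a, b⟩
  · rw [hcomp, hE _ h1 a, hF _ h2' b]
  · exfalso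
    rw [hcomp, hE _ h2' a, hF _ h1 b] at hlt
    omega

lemma exists_perm_row {r n : ℕ} (σ : Om r n) (i : Fin n) :
    ∃ π : Equiv.Perm (Fin r), ∀ c, (σ (i, π c) : ℕ) = srt r (rowEdge σ i) c := by
  have h : ∀ c, ∃ d, (σ (i, d) : ℕ) = srt r (rowEdge σ i) c := fun c =>
    (mem_rowEdge σ i _).mp (srt_mem (card_rowEdge σ i) c)
  choose d hd using h
  have hinj : Function.Injective d := by
    intro a b hab
    apply (srt_strictMono (card_rowEdge σ i)).injective
    rw [← hd, ← hd, hab]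
  exact ⟨Equiv.ofBijective d (Finite.injective_iff_bijective.mp hinj), hd⟩

lemma exists_param {r n k : ℕ} (hr : 0 < r) {P : Finset (Finset ℕ)} (s : Fin r → Prop)
    (hs : ∀ e f : Finset ℕ, e.card = r → f.card = r → FormsPattern r e f P →
      srt r e ⟨0, hr⟩ < srt r f ⟨0, hr⟩ → ∀ c, (srt r e c < srt r f c ↔ s c))
    (σ : Om r n) (h : k ≤ zClique r {P} (toM σ)) :
    ∃ (i : Fin k ↪ Fin n) (π : Fin k → Equiv.Perm (Fin r)),
      ∀ c a b, a < b → ((σ (i a, π a c) : ℕ) < σ (i b, π b c) ↔ s c) := by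
  have hz : zClique r {P} (toM σ) ∈
      {k | ∃ K : Finset (Finset ℕ), K ⊆ toM σ ∧ IsClique r {P} K ∧ K.card = k} := by
    apply Nat.sSup_mem
    · exact ⟨0, ∅, by simp, by simp [IsClique], rfl⟩
    · refine ⟨(toM σ).card, ?_⟩
      rintro k ⟨L, hL, -, rfl⟩
      exact Finset.card_le_card hL
  obtain ⟨K', hK'M, hK'c, hK'k⟩ := hz
  rw [← hK'k] at h
  obtain ⟨K, hKK', hKk⟩ := Finset.exists_subset_card_eq h
  have hKform : ∀ e ∈ K, ∀ f ∈ K, e ≠ f → FormsPattern r e f P := by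
    intro e he f hf hne
    obtain ⟨Q, hQ, hform⟩ := hK'c.2.2 e (hKK' he) f (hKK' hf) hne
    rw [Set.mem_singleton_iff] at hQ
    exact hQ ▸ hform
  have hKcard : ∀ e ∈ K, e.card = r := fun e he => hK'c.1 e (hKK' he)
  have hminj : Set.InjOn (fun e => srt r e ⟨0, hr⟩) ↑K := by
    intro e he f hf hef
    by_contra hne
    have hd := hK'c.2.1 e (hKK' he) f (hKK' hf) hne
    rw [Finset.disjoint_left] at hd
    refine hd (srt_mem (hKcard e he) ⟨0, hr⟩) ?_
    simp only at hef
    rw [hef]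
    exact srt_mem (hKcard f hf) _
  have hSk : (K.image (fun e => srt r e ⟨0, hr⟩)).card = k := by
    rw [Finset.card_image_of_injOn hminj, hKk]
  have hex : ∀ a : Fin k, ∃ i : Fin n, rowEdge σ i ∈ K ∧
      srt r (rowEdge σ i) ⟨0, hr⟩ = (K.image (fun e => srt r e ⟨0, hr⟩)).orderEmbOfFin hSk a := by
    intro a
    have := Finset.orderEmbOfFin_mem _ hSk a
    rw [Finset.mem_image] at this
    obtain ⟨e, heK, he⟩ := this
    have heM := hK'M (hKK' heK)
    simp only [toM, Finset.mem_image] at heM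
    obtain ⟨i, -, rfl⟩ := heM
    exact ⟨i, heK, he⟩
  choose i hiK hi using hex
  choose π hπ using exists_perm_row σ
  have hinj : Function.Injective i := by
    intro a b hab
    apply ((K.image (fun e => srt r e ⟨0, hr⟩)).orderEmbOfFin hSk).injective
    rw [← hi, ← hi, hab]
  refine ⟨⟨i, hinj⟩, fun a => π (i a), ?_⟩
  intro c a b hab
  simp only [Function.Embedding.coeFn_mk]
  rw [hπ, hπ]
  have hlt : srt r (rowEdge σ (i a)) ⟨0, hr⟩ < srt r (rowEdge σ (i b)) ⟨0, hr⟩ := by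
    rw [hi, hi]
    exact ((K.image (fun e => srt r e ⟨0, hr⟩)).orderEmbOfFin hSk).strictMono hab
  refine hs _ _ (card_rowEdge _ _) (card_rowEdge _ _) (hKform _ (hiK a) _ (hiK b) ?_) hlt c
  intro heq
  rw [heq] at hlt
  exact lt_irrefl _ hlt

lemma perm_mono_eq {k : ℕ} (θ : Equiv.Perm (Fin k)) (h : StrictMono θ) : θ = 1 := by
  have h2 := (Subsingleton.elim (StrictMono.orderIsoOfSurjective θ h θ.surjective)
    (OrderIso.refl (Fin k)))
  ext a
  have := congrArg (fun e => e a) h2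
  simp at this
  simp [this]

lemma sign_cancel {k : ℕ} {s : Prop} {x y : Fin k → ℕ} (hxi : Function.Injective x)
    (hx : ∀ a b, a < b → (x a < x b ↔ s)) (hy : ∀ a b, a < b → (y a < y b ↔ s))
    (ρ τ : Equiv.Perm (Fin k)) (h : ∀ a, x (ρ a) = y (τ a)) : ρ = τ := by
  have hyi : Function.Injective y := by
    intro a b hab
    have := hxi (a₁ := ρ (τ.symm a)) (a₂ := ρ (τ.symm b)) (by rw [h, h]; simpa using hab)
    simpa using this
  have hθ : StrictMono (ρ.symm.trans τ) := by
    intro a b hab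
    have ha : x a = y ((ρ.symm.trans τ) a) := by have := h (ρ.symm a); simpa using this
    have hb : x b = y ((ρ.symm.trans τ) b) := by have := h (ρ.symm b); simpa using this
    by_contra hcon
    have hne : (ρ.symm.trans τ) b ≠ (ρ.symm.trans τ) a :=
      fun h => hab.ne' ((ρ.symm.trans τ).injective h)
    have hlt := lt_of_le_of_ne (not_lt.mp hcon) hne
    have h1 := hx a b hab
    have h2 := hy _ _ hlt
    rw [← ha, ← hb] at h2
    have h3 : x a ≠ x b := fun h => hab.ne (hxi h)
    by_cases hsx : s
    · have := h1.mpr hsx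
      have := h2.mpr hsx
      omega
    · have := mt h1.mp hsx
      have := mt h2.mp hsx
      omega
  have := perm_mono_eq _ hθ
  ext a
  have h4 := congrArg (fun e => e (ρ a)) this
  simp at h4
  rw [h4]

lemma param_count {r n k : ℕ} (s : Fin r → Prop) (i : Fin k ↪ Fin n)
    (π : Fin k → Equiv.Perm (Fin r)) :
    (univ.filter (fun σ : Om r n =>
      ∀ c a b, a < b → ((σ (i a, π a c) : ℕ) < σ (i b, π b c) ↔ s c))).card * (k.factorial) ^ r
      ≤ Fintype.card (Om r n) := by
  let J : Fin k × Fin r ↪ Fin n × Fin r :=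
    ⟨fun p => (i p.1, π p.1 p.2), by
      rintro ⟨a, c⟩ ⟨b, d⟩ h
      simp only [Prod.mk.injEq] at h
      have hab := i.injective h.1
      subst hab
      have := (π a).injective h.2
      rw [this]⟩
  let G : (Fin r → Equiv.Perm (Fin k)) → Equiv.Perm (Fin k × Fin r) := fun ρ =>
    { toFun := fun p => (ρ p.2 p.1, p.2)
      invFun := fun p => ((ρ p.2).symm p.1, p.2)
      left_inv := fun p => by simp
      right_inv := fun p => by simp }
  have hcard : (k.factorial) ^ r = (univ : Finset (Fin r → Equiv.Perm (Fin k))).card := by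
    simp [Fintype.card_perm]
  rw [hcard, ← Finset.card_product, ← Finset.card_univ]
  apply Finset.card_le_card_of_injOn (fun p => ((G p.2).viaEmbedding J).trans p.1)
  · intro p _
    simp
  · rintro ⟨σ, ρ⟩ h1 ⟨τ, ρ'⟩ h2 heq
    simp only [Finset.coe_product, Set.mem_prod, Finset.mem_coe, Finset.mem_filter,
      Finset.mem_univ, true_and, and_true] at h1 h2
    simp only at heq
    have hv : ∀ a c, σ (J (ρ c a, c)) = τ (J (ρ' c a, c)) := by
      intro a c
      have := congrArg (fun e => e (J (a, c))) heq
      simp only [Equiv.trans_apply, Equiv.Perm.viaEmbedding_apply] at this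
      exact this
    have hρ : ρ = ρ' := by
      funext c
      apply sign_cancel (s := s c) (x := fun a => (σ (J (a, c)) : ℕ))
        (y := fun a => (τ (J (a, c)) : ℕ))
      · intro a b hab
        have := J.injective (σ.injective (Subtype.ext hab))
        simpa using this
      · exact fun a b hab => h1 c a b hab
      · exact fun a b hab => h2 c a b hab
      · intro a
        exact congrArg Subtype.val (hv a c)
    subst hρ
    have : σ = τ := by
      ext v
      have := congrArg (fun e => e (((G ρ).viaEmbedding J).symm v)) heq
      simp only [Equiv.trans_apply, Equiv.apply_symm_apply] at this
      rw [this]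
    rw [this]

/-- Upper tail, in the permutation model, as a counting bound. -/
lemma upper_count {r n k : ℕ} (hr : 0 < r) {P : Finset (Finset ℕ)}
    (hP : IsOrderedMatching r 2 P) (B : Om r n → Prop)
    (hB : ∀ σ, B σ → k ≤ zClique r {P} (toM σ)) :
    (univ.filter B).card * (k.factorial) ^ r
      ≤ n ^ k * (r.factorial) ^ k * Fintype.card (Om r n) := by
  obtain ⟨s, hs⟩ := pattern_sign hr hP
  let E : (Fin k ↪ Fin n) × (Fin k → Equiv.Perm (Fin r)) → Finset (Om r n) := fun q =>
    univ.filter (fun σ : Om r n =>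
      ∀ c a b, a < b → ((σ (q.1 a, q.2 a c) : ℕ) < σ (q.1 b, q.2 b c) ↔ s c))
  have hsub : univ.filter B ⊆ univ.biUnion E := by
    intro σ hσ
    obtain ⟨i, π, h⟩ := exists_param hr s hs σ (hB σ (Finset.mem_filter.mp hσ).2)
    rw [Finset.mem_biUnion]
    exact ⟨(i, π), mem_univ _, by simpa [E] using h⟩
  calc (univ.filter B).card * (k.factorial) ^ r
      ≤ (∑ q, (E q).card) * (k.factorial) ^ r :=
        Nat.mul_le_mul_right _ ((Finset.card_le_card hsub).trans Finset.card_biUnion_le)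
    _ = ∑ q, (E q).card * (k.factorial) ^ r := by rw [Finset.sum_mul]
    _ ≤ ∑ q : (Fin k ↪ Fin n) × (Fin k → Equiv.Perm (Fin r)), Fintype.card (Om r n) :=
        Finset.sum_le_sum (fun q _ => by
          have := param_count s q.1 q.2
          convert this)
    _ ≤ n ^ k * (r.factorial) ^ k * Fintype.card (Om r n) := by
        rw [Finset.sum_const, smul_eq_mul, Finset.card_univ, Fintype.card_prod]
        apply Nat.mul_le_mul_right
        apply Nat.mul_le_mul
        · rw [Fintype.card_embedding_eq]
          simpa using Nat.descFactorial_le_pow n k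
        · simp [Fintype.card_perm]

lemma lower_prob {r n k : ℕ} (hr : 0 < r) {P : Finset (Finset ℕ)} (hcP : Collectable r P)
    (hk : 1 ≤ k) (hkn : 4 * (r * k) ^ r ≤ n)
    (A : Finset (Finset ℕ) → Prop) (hA : ∀ M, A M → 2 * zClique r {P} M < k) :
    prob r n A ≤ Real.exp 2 * (1 / 2) ^ k := by
  rw [prob_eq hr]
  have hcount := lower_count (n := n) (k := k) hr hcP (fun σ => A (toM σ)) (fun σ h => hA _ h)
  have hO : (0 : ℝ) < (Fintype.card (Om r n) : ℝ) := by exact_mod_cast card_Om_pos r n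
  set D := (r * k) ^ r with hD
  have hDk : k ≤ D := by
    calc k ≤ r * k := Nat.le_mul_of_pos_left _ hr
      _ ≤ (r * k) ^ r := Nat.le_self_pow hr.ne' _
  have hDpos : (0 : ℝ) < (D : ℝ) := by
    have : 0 < D := by omega
    exact_mod_cast this
  have hcount' : ((univ.filter (fun σ : Om r n => A (toM σ))).card : ℝ) * (D : ℝ) ^ n
      ≤ 2 ^ k * ((D : ℝ) - ((k / 2 : ℕ) : ℝ)) ^ n * (Fintype.card (Om r n) : ℝ) := by
    rw [← Nat.cast_sub (by omega)]
    exact_mod_cast hcount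
  have hstep : ((D : ℝ) - ((k / 2 : ℕ) : ℝ)) ^ n ≤ (D : ℝ) ^ n * Real.exp (2 - 2 * k) := by
    have h1 : (D : ℝ) - ((k / 2 : ℕ) : ℝ) ≤ D * Real.exp (-(((k / 2 : ℕ) : ℝ) / D)) := by
      have := Real.add_one_le_exp (-(((k / 2 : ℕ) : ℝ) / D))
      calc (D : ℝ) - ((k / 2 : ℕ) : ℝ) = D * (-(((k / 2 : ℕ) : ℝ) / D) + 1) := by
            field_simp
            ring
        _ ≤ _ := mul_le_mul_of_nonneg_left this hDpos.le
    have h0 : (0 : ℝ) ≤ (D : ℝ) - ((k / 2 : ℕ) : ℝ) := by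
      have : k / 2 ≤ D := by omega
      have : ((k / 2 : ℕ) : ℝ) ≤ D := by exact_mod_cast this
      linarith
    refine (pow_le_pow_left₀ h0 h1 n).trans ?_
    rw [mul_pow, ← Real.exp_nat_mul]
    apply mul_le_mul_of_nonneg_left _ (by positivity)
    apply Real.exp_le_exp.mpr
    have hn : (4 : ℝ) * D ≤ n := by exact_mod_cast hkn
    have hh : (k : ℝ) ≤ 2 * ((k / 2 : ℕ) : ℝ) + 1 := by
      have : k ≤ 2 * (k / 2) + 1 := by omega
      exact_mod_cast this
    have h4 : 4 * ((k / 2 : ℕ) : ℝ) ≤ n * (((k / 2 : ℕ) : ℝ) / D) := by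
      rw [mul_div_assoc', le_div_iff₀ hDpos]
      have : (0 : ℝ) ≤ ((k / 2 : ℕ) : ℝ) := Nat.cast_nonneg _
      nlinarith
    linarith
  have hexp : (2 : ℝ) ^ k * Real.exp (2 - 2 * k) ≤ Real.exp 2 * (1 / 2) ^ k := by
    have h2 : Real.exp (-2) ≤ 1 / 4 := by
      have : (2 : ℝ) ≤ Real.exp 1 := by have := Real.add_one_le_exp (1 : ℝ); linarith
      have h4 : (4 : ℝ) ≤ Real.exp 2 := by
        have : Real.exp 2 = Real.exp 1 * Real.exp 1 := by rw [← Real.exp_add]; norm_num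
        nlinarith
      rw [Real.exp_neg, ← one_div]
      exact one_div_le_one_div_of_le (by norm_num) h4
    have h3 : Real.exp (2 - 2 * k) = Real.exp 2 * Real.exp (-2) ^ k := by
      rw [← Real.exp_nat_mul, ← Real.exp_add]
      congr 1
      ring
    rw [h3]
    calc (2 : ℝ) ^ k * (Real.exp 2 * Real.exp (-2) ^ k)
        ≤ (2 : ℝ) ^ k * (Real.exp 2 * (1 / 4) ^ k) := by gcongr
      _ = Real.exp 2 * (2 * (1 / 4)) ^ k := by rw [mul_pow]; ring
      _ = _ := by norm_num
  rw [div_le_iff₀ hO]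
  have hDn : (0 : ℝ) < (D : ℝ) ^ n := by positivity
  refine le_of_mul_le_mul_right (hcount'.trans ?_) hDn
  calc 2 ^ k * ((D : ℝ) - ((k / 2 : ℕ) : ℝ)) ^ n * (Fintype.card (Om r n) : ℝ)
      ≤ 2 ^ k * ((D : ℝ) ^ n * Real.exp (2 - 2 * k)) * (Fintype.card (Om r n) : ℝ) := by gcongr
    _ = (2 ^ k * Real.exp (2 - 2 * k)) * ((D : ℝ) ^ n * (Fintype.card (Om r n) : ℝ)) := by ring
    _ ≤ (Real.exp 2 * (1 / 2) ^ k) * ((D : ℝ) ^ n * (Fintype.card (Om r n) : ℝ)) := by gcongr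
    _ = _ := by ring

lemma upper_prob {r n k : ℕ} (hr : 0 < r) {P : Finset (Finset ℕ)} (hP : IsOrderedMatching r 2 P)
    (hkn : 2 * 3 ^ r * (r.factorial : ℝ) * n ≤ (k : ℝ) ^ r)
    (A : Finset (Finset ℕ) → Prop) (hA : ∀ M, A M → k ≤ zClique r {P} M) :
    prob r n A ≤ (1 / 2) ^ k := by
  rw [prob_eq hr]
  have hcount := upper_count (n := n) (k := k) hr hP (fun σ => A (toM σ)) (fun σ h => hA _ h)
  have hO : (0 : ℝ) < (Fintype.card (Om r n) : ℝ) := by exact_mod_cast card_Om_pos r n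
  have hcount' : ((univ.filter (fun σ : Om r n => A (toM σ))).card : ℝ) * (k.factorial : ℝ) ^ r
      ≤ (n : ℝ) ^ k * (r.factorial : ℝ) ^ k * (Fintype.card (Om r n) : ℝ) := by
    exact_mod_cast hcount
  have hfac : (k : ℝ) ^ k ≤ 3 ^ k * (k.factorial : ℝ) := by
    have h := Real.pow_div_factorial_le_exp (k : ℝ) (Nat.cast_nonneg k) k
    rw [div_le_iff₀ (by positivity)] at h
    refine h.trans ?_
    gcongr
    rw [← Real.exp_one_pow]
    have := Real.exp_one_lt_d9
    gcongr
    linarith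
  have hkey : (n : ℝ) ^ k * (r.factorial : ℝ) ^ k ≤ (1 / 2) ^ k * (k.factorial : ℝ) ^ r := by
    have h1 : (2 * 3 ^ r * (r.factorial : ℝ) * n) ^ k ≤ ((3 : ℝ) ^ r) ^ k * (k.factorial : ℝ) ^ r := by
      calc (2 * 3 ^ r * (r.factorial : ℝ) * n) ^ k ≤ ((k : ℝ) ^ r) ^ k := by gcongr
        _ = ((k : ℝ) ^ k) ^ r := by rw [← pow_mul, ← pow_mul, mul_comm]
        _ ≤ (3 ^ k * (k.factorial : ℝ)) ^ r := by gcongr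
        _ = _ := by rw [mul_pow, ← pow_mul, ← pow_mul, mul_comm k r]
    have h3 : (0 : ℝ) < ((3 : ℝ) ^ r) ^ k := by positivity
    have h2 : (2 * 3 ^ r * (r.factorial : ℝ) * n) ^ k
        = ((3 : ℝ) ^ r) ^ k * (2 ^ k * ((n : ℝ) ^ k * (r.factorial : ℝ) ^ k)) := by
      rw [mul_pow, mul_pow, mul_pow]
      ring
    rw [h2] at h1
    have h4 := le_of_mul_le_mul_left h1 h3
    have h5 : ((1 : ℝ) / 2) ^ k * 2 ^ k = 1 := by rw [← mul_pow]; norm_num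
    calc (n : ℝ) ^ k * (r.factorial : ℝ) ^ k
        = (1 / 2) ^ k * (2 ^ k * ((n : ℝ) ^ k * (r.factorial : ℝ) ^ k)) := by
          rw [← mul_assoc ((1 / 2 : ℝ) ^ k), h5, one_mul]
      _ ≤ _ := by gcongr
  rw [div_le_iff₀ hO]
  have hf : (0 : ℝ) < (k.factorial : ℝ) ^ r := by positivity
  refine le_of_mul_le_mul_right (hcount'.trans ?_) hf
  calc _ ≤ (1 / 2) ^ k * (k.factorial : ℝ) ^ r * (Fintype.card (Om r n) : ℝ) := by gcongr
    _ = _ := by ring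

lemma prob_le_one {r n : ℕ} (A : Finset (Finset ℕ) → Prop) : prob r n A ≤ 1 := by
  unfold prob
  apply div_le_one_of_le₀ _ (Nat.cast_nonneg _)
  exact_mod_cast Finset.card_filter_le _ _

lemma prob_and_ge {r n : ℕ} (hr : 0 < r) (A B : Finset (Finset ℕ) → Prop) :
    1 - prob r n (fun M => ¬ A M) - prob r n (fun M => ¬ B M) ≤ prob r n (fun M => A M ∧ B M) := by
  have hO : (0 : ℝ) < (Fintype.card (Om r n) : ℝ) := by exact_mod_cast card_Om_pos r n
  rw [prob_eq hr, prob_eq hr, prob_eq hr]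
  rw [← div_self hO.ne', ← sub_div, ← sub_div]
  apply div_le_div_of_nonneg_right _ hO.le
  have : (univ : Finset (Om r n)) ⊆ (univ.filter (fun σ => A (toM σ) ∧ B (toM σ))
      ∪ univ.filter (fun σ => ¬ A (toM σ))) ∪ univ.filter (fun σ => ¬ B (toM σ)) := by
    intro σ _
    simp only [Finset.mem_union, Finset.mem_filter, Finset.mem_univ, true_and]
    tauto
  have h := (Finset.card_le_card this).trans ((Finset.card_union_le _ _).trans
    (Nat.add_le_add_right (Finset.card_union_le _ _) _))
  rw [Finset.card_univ] at h
  rw [sub_sub, sub_le_iff_le_add, ← add_assoc]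
  norm_cast
  refine h.trans (le_of_eq ?_)
  congr!

/-- **Theorem (single collectable pattern).** For every `r ≥ 2` and every collectable
`r`-pattern `P`, a.a.s. `z_{{P}}(RM_n^(r)) = Θ(n^(1/r))`. -/
theorem aas_single_collectable (r : ℕ) (hr : 2 ≤ r) (P : Finset (Finset ℕ))
    (hP : IsOrderedMatching r 2 P) (hcP : Collectable r P) :
    ∃ c₁ c₂ : ℝ, 0 < c₁ ∧ 0 < c₂ ∧
      Filter.Tendsto
        (fun n : ℕ => prob r n (fun M =>
          c₁ * (n : ℝ) ^ ((1 : ℝ) / (r : ℝ)) ≤ (zClique r {P} M : ℝ) ∧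
          (zClique r {P} M : ℝ) ≤ c₂ * (n : ℝ) ^ ((1 : ℝ) / (r : ℝ))))
        Filter.atTop (nhds 1) := by
  have hr0 : 0 < r := by omega
  have hrR : (0 : ℝ) < (r : ℝ) := by exact_mod_cast hr0
  have hfacpos : (1 : ℝ) ≤ (r.factorial : ℝ) := by exact_mod_cast Nat.succ_le_of_lt r.factorial_pos
  set C : ℝ := 6 * (r.factorial : ℝ) with hC
  have hCpos : 0 < C := by positivity
  have hx : Filter.Tendsto (fun n : ℕ => (n : ℝ) ^ ((1 : ℝ) / (r : ℝ))) Filter.atTop Filter.atTop :=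
    (tendsto_rpow_atTop (by positivity)).comp tendsto_natCast_atTop_atTop
  have hxpow : ∀ n : ℕ, ((n : ℝ) ^ ((1 : ℝ) / (r : ℝ))) ^ r = n := by
    intro n
    rw [one_div]
    exact Real.rpow_inv_natCast_pow (Nat.cast_nonneg n) hr0.ne'
  refine ⟨1 / (8 * r), C, by positivity, hCpos, ?_⟩
  have hk1 : Filter.Tendsto (fun n : ℕ => ⌊(n : ℝ) ^ ((1 : ℝ) / (r : ℝ)) / (2 * r)⌋₊)
      Filter.atTop Filter.atTop :=
    tendsto_nat_floor_atTop.comp (hx.atTop_div_const (by positivity))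
  have hk2 : Filter.Tendsto (fun n : ℕ => ⌈C * (n : ℝ) ^ ((1 : ℝ) / (r : ℝ))⌉₊)
      Filter.atTop Filter.atTop :=
    tendsto_nat_ceil_atTop.comp (hx.const_mul_atTop hCpos)
  have hhalf : Filter.Tendsto (fun k : ℕ => ((1 : ℝ) / 2) ^ k) Filter.atTop (nhds 0) :=
    tendsto_pow_atTop_nhds_zero_of_lt_one (by norm_num) (by norm_num)
  have hlow : Filter.Tendsto (fun n : ℕ => 1 - Real.exp 2 *
      ((1 : ℝ) / 2) ^ ⌊(n : ℝ) ^ ((1 : ℝ) / (r : ℝ)) / (2 * r)⌋₊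
      - ((1 : ℝ) / 2) ^ ⌈C * (n : ℝ) ^ ((1 : ℝ) / (r : ℝ))⌉₊) Filter.atTop (nhds 1) := by
    have := (((hhalf.comp hk1).const_mul (Real.exp 2)).const_sub 1).sub (hhalf.comp hk2)
    simpa using this
  refine tendsto_of_tendsto_of_tendsto_of_le_of_le' hlow tendsto_const_nhds ?_
    (Filter.Eventually.of_forall (fun n => prob_le_one _))
  filter_upwards [hx.eventually_ge_atTop (4 * (r : ℝ))] with n hn
  set x : ℝ := (n : ℝ) ^ ((1 : ℝ) / (r : ℝ)) with hxdef
  have hx0 : 0 ≤ x := by positivity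
  refine le_trans ?_ (prob_and_ge hr0 _ _)
  have hL : prob r n (fun M => ¬ (1 / (8 * (r : ℝ)) * x ≤ (zClique r {P} M : ℝ)))
      ≤ Real.exp 2 * (1 / 2) ^ ⌊x / (2 * r)⌋₊ := by
    have hge2 : (2 : ℝ) ≤ x / (2 * r) := by
      rw [le_div_iff₀ (by positivity)]
      linarith
    apply lower_prob hr0 hcP
    · rw [Nat.one_le_floor_iff]
      linarith
    · have hfl : ((⌊x / (2 * r)⌋₊ : ℕ) : ℝ) ≤ x / (2 * r) := Nat.floor_le (by positivity)
      have h1 : (r : ℝ) * ((⌊x / (2 * r)⌋₊ : ℕ) : ℝ) ≤ x / 2 := by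
        rw [le_div_iff₀ (by positivity)] at hfl
        linarith
      have h2 : ((r : ℝ) * ((⌊x / (2 * r)⌋₊ : ℕ) : ℝ)) ^ r ≤ (x / 2) ^ r := by gcongr
      rw [div_pow, hxpow] at h2
      have h3 : (4 : ℝ) ≤ 2 ^ r := by
        calc (4 : ℝ) = 2 ^ 2 := by norm_num
          _ ≤ 2 ^ r := pow_le_pow_right₀ (by norm_num) hr
      rw [le_div_iff₀ (by positivity)] at h2
      have h4 : 4 * ((r : ℝ) * ((⌊x / (2 * r)⌋₊ : ℕ) : ℝ)) ^ r ≤ n := by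
        have : (0 : ℝ) ≤ ((r : ℝ) * ((⌊x / (2 * r)⌋₊ : ℕ) : ℝ)) ^ r := by positivity
        nlinarith
      exact_mod_cast h4
    · intro M hM
      have hM' := not_le.mp hM
      have hfl := Nat.lt_floor_add_one (x / (2 * r))
      have e1 : 1 / (8 * (r : ℝ)) * x = (x / (2 * r)) / 4 := by
        field_simp
        ring
      rw [e1] at hM'
      have : (2 : ℝ) * (zClique r {P} M : ℝ) < ((⌊x / (2 * r)⌋₊ : ℕ) : ℝ) := by linarith
      exact_mod_cast this
  have hU : prob r n (fun M => ¬ ((zClique r {P} M : ℝ) ≤ C * x))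
      ≤ (1 / 2) ^ ⌈C * x⌉₊ := by
    apply upper_prob hr0 hP
    · have h1 : (C * x) ^ r ≤ ((⌈C * x⌉₊ : ℕ) : ℝ) ^ r := by
        gcongr
        exact Nat.le_ceil _
      refine le_trans ?_ h1
      rw [mul_pow, hxpow]
      apply mul_le_mul_of_nonneg_right _ (Nat.cast_nonneg n)
      rw [hC, mul_pow]
      have h6 : (6 : ℝ) ^ r = 2 ^ r * 3 ^ r := by rw [← mul_pow]; norm_num
      rw [h6]
      have ha : (2 : ℝ) ≤ 2 ^ r := le_self_pow₀ (by norm_num) hr0.ne'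
      have hb : (r.factorial : ℝ) ≤ (r.factorial : ℝ) ^ r := le_self_pow₀ hfacpos hr0.ne'
      gcongr
    · intro M hM
      have hM' := not_le.mp hM
      exact Nat.ceil_le.mpr hM'.le
  linarith
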